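/- Let C₅ > 0, let Ĝ : [0,1] × ℝ^{2n} → ℝ be a continuous function satisfying |Ĝ(t,w) − Ĝ(t,w')| ≤ (C₅/t²)|w − w'| for all t ∈ (0,1] and all w, w' ∈ ℝ^{2n}, and let f : [0,1] × ℝ^{2n} → [0,1] be a smooth function. Then there exists a continuous function G* : [0,1] × ℝ^{2n} → ℝ which is smooth in the variable w and satisfies, for all t ∈ (0,1] and all w ∈ ℝ^{2n}: (i) |∇_w f(t,w)| · |G*(t,w) − Ĝ(t,w)| ≤ C₅/t², and (ii) |∇_w G*(t,w)| ≤ 2C₅/t². -/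

import Mathlib

/-- `F : [0,1] × ℝ^{2n} → ℝ` is smooth in the variable `w`: all partial derivatives
with respect to `w` of every order exist and are continuous on `[0,1] × ℝ^{2n}`. -/
def SmoothInSecond (n : ℕ) (F : ℝ → EuclideanSpace ℝ (Fin (2 * n)) → ℝ) : Prop :=
  (∀ t ∈ Set.Icc (0:ℝ) 1, ContDiff ℝ (⊤ : ℕ∞) (F t)) ∧
  ∀ k : ℕ, ContinuousOn (fun p : ℝ × EuclideanSpace ℝ (Fin (2 * n)) => iteratedFDeriv ℝ k (F p.1) p.2)
    (Set.Icc (0:ℝ) 1 ×ˢ (Set.univ : Set (EuclideanSpace ℝ (Fin (2 * n)))))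

/-!
Write `g(w)` for the function `t ↦ Ĝ(t, w)`, an element of the Banach space `C([0,1])`, and put
`G*(w) = ∫ φ(y) g(w - ε(w) y) dy`, where `φ` is a bump function and the width `ε` depends on `w`.
Mollifying with values in `C([0,1])` yields the smoothness in `w` and the joint continuity of all
`w`-derivatives at once, uniformly down to `t = 0`, where no Lipschitz bound is available.
If `Ĝ(t, ·)` is `K`-Lipschitz, then `|G* - Ĝ| ≤ K ε` and `G*(t, ·)` is Lipschitz with constant
`K (1 + Lip ε)`. So it remains to find a smooth, positive, `1`-Lipschitz `ε` with `|∇f| ε ≤ 1` for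
all `t`. The distance in `ℝ^{2n} × ℝ` from `(w, 0)` to the epigraph of a positive continuous
function is a positive `1`-Lipschitz minorant of it; take one that is small enough on unit balls and
mollify it at unit scale.
-/

section

open MeasureTheory Metric Set
open scoped ContDiff NNReal

theorem exists_lipschitzWith_one_pos_le {E : Type*} [PseudoMetricSpace E] {f : E → ℝ}
    (hf : Continuous f) (hpos : ∀ w, 0 < f w) :
    ∃ δ : E → ℝ, LipschitzWith 1 δ ∧ ∀ w, 0 < δ w ∧ δ w ≤ f w := by
  let A : Set (E × ℝ) := {p | f p.1 ≤ p.2}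
  have hA : IsClosed A := isClosed_le (hf.comp continuous_fst) continuous_snd
  have graph_mem (w : E) : (w, f w) ∈ A := le_refl (f w)
  have notMem (w : E) : (w, (0 : ℝ)) ∉ A := (hpos w).not_ge
  refine ⟨fun w ↦ infDist (w, 0) A, ?_, fun w ↦ ⟨?_, ?_⟩⟩
  · simpa [Function.comp_def] using
      (lipschitz_infDist_pt A).comp (LipschitzWith.prodMk_right (0 : ℝ))
  · exact (hA.notMem_iff_infDist_pos ⟨_, graph_mem w⟩).1 (notMem w)
  · calc infDist (w, 0) A ≤ dist (w, 0) (w, f w) := infDist_le_dist_of_mem (graph_mem w)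
      _ = f w := by simp [Prod.dist_eq, abs_of_pos (hpos w), (hpos w).le]

theorem exists_continuous_norm_le {X E F : Type*} [TopologicalSpace X] [CompactSpace X]
    [TopologicalSpace E] [SeminormedAddCommGroup F] {f : E → X → F}
    (hf : Continuous fun p : E × X ↦ f p.1 p.2) :
    ∃ N : E → ℝ, Continuous N ∧ ∀ w x, ‖f w x‖ ≤ N w :=
  let g : C(E, C(X, F)) := ContinuousMap.curry ⟨_, hf⟩
  ⟨fun w ↦ ‖g w‖, g.continuous.norm, fun w x ↦ (g w).norm_coe_le_norm x⟩

section BumpAverage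

variable {E F : Type*} [NormedAddCommGroup E] [NormedSpace ℝ E] [FiniteDimensional ℝ E]
  [MeasurableSpace E] [BorelSpace E] [NormedAddCommGroup F] [NormedSpace ℝ F]
  (φ : ContDiffBump (0 : E)) (μ : Measure E)

/-- The mollification of `g` at `w` with kernel `φ` at scale `r`. The scale is an argument so that
it may depend on `w`; at scale `0` there is no smoothing. -/
noncomputable def bumpAverage (r : ℝ) (g : E → F) (w : E) : F :=
  ∫ y, φ.normed μ y • g (w - r • y) ∂μ

variable {φ μ}

section OpenPosMeasure

variable [IsLocallyFiniteMeasure μ] [μ.IsOpenPosMeasure]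

theorem normed_eq_zero_of_rOut_le_norm {y : E} (hy : φ.rOut ≤ ‖y‖) : φ.normed μ y = 0 := by
  have : y ∉ Function.support (φ.normed μ) := by simpa [φ.support_normed_eq] using hy
  simpa using this

theorem norm_integral_normed_smul_le {h : E → F} {C : ℝ} (hC : ∀ y, ‖y‖ < φ.rOut → ‖h y‖ ≤ C) :
    ‖∫ y, φ.normed μ y • h y ∂μ‖ ≤ C := by
  have pointwise (y : E) : ‖φ.normed μ y • h y‖ ≤ φ.normed μ y * C := by
    rw [norm_smul, Real.norm_of_nonneg (φ.nonneg_normed y)]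
    rcases lt_or_ge ‖y‖ φ.rOut with hy | hy
    · exact mul_le_mul_of_nonneg_left (hC y hy) (φ.nonneg_normed y)
    · simp [normed_eq_zero_of_rOut_le_norm hy]
  calc ‖∫ y, φ.normed μ y • h y ∂μ‖ ≤ ∫ y, φ.normed μ y * C ∂μ :=
        norm_integral_le_of_norm_le (φ.integrable_normed.mul_const C) (.of_forall pointwise)
    _ = C := by rw [integral_mul_const, φ.integral_normed, one_mul]

theorem integrable_normed_smul {h : E → F} (hh : Continuous h) :
    Integrable (fun y ↦ φ.normed μ y • h y) μ :=
  (φ.continuous_normed.smul hh).integrable_of_hasCompactSupport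
    φ.hasCompactSupport_normed.smul_right

theorem bumpAverage_zero [CompleteSpace F] (g : E → F) (w : E) : bumpAverage φ μ 0 g w = g w := by
  simp [bumpAverage, integral_smul_const, φ.integral_normed]

theorem bumpAverage_pos {g : E → ℝ} (hg : Continuous g) (hpos : ∀ w, 0 < g w) (r : ℝ) (w : E) :
    0 < bumpAverage φ μ r g w := by
  refine Continuous.integral_pos_of_hasCompactSupport_nonneg_nonzero (x := 0)
    (φ.continuous_normed.smul (by fun_prop)) φ.hasCompactSupport_normed.smul_right
    (fun y ↦ mul_nonneg (φ.nonneg_normed y) (hpos _).le) ?_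
  have : (0 : E) ∈ Function.support (φ.normed μ) := by
    simpa [φ.support_normed_eq] using φ.rOut_pos
  exact mul_ne_zero this (hpos _).ne'

theorem dist_bumpAverage_le {g : E → F} {K : ℝ≥0} (hg : LipschitzWith K g) (r s : ℝ) (v w : E) :
    dist (bumpAverage φ μ r g v) (bumpAverage φ μ s g w) ≤
      K * (dist v w + φ.rOut * dist r s) := by
  have hint (r : ℝ) (w : E) : Integrable (fun y ↦ φ.normed μ y • g (w - r • y)) μ :=
    integrable_normed_smul (hg.continuous.comp (by fun_prop))
  rw [dist_eq_norm, bumpAverage, bumpAverage, ← integral_sub (hint r v) (hint s w)]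
  simp only [← smul_sub]
  refine norm_integral_normed_smul_le fun y hy ↦ ?_
  calc ‖g (v - r • y) - g (w - s • y)‖ ≤ K * ‖(v - r • y) - (w - s • y)‖ := hg.norm_sub_le _ _
    _ = K * ‖(v - w) - (r - s) • y‖ := by congr 2; module
    _ ≤ K * (‖v - w‖ + ‖y‖ * ‖r - s‖) := by
      gcongr; exact (norm_sub_le _ _).trans_eq (by rw [norm_smul, mul_comm ‖y‖])
    _ ≤ K * (dist v w + φ.rOut * dist r s) := by
      rw [dist_eq_norm, dist_eq_norm]; gcongr

theorem bumpAverage_apply {X : Type*} [TopologicalSpace X] [CompactSpace X] [CompleteSpace F]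
    {g : E → C(X, F)} (hg : Continuous g) (r : ℝ) (w : E) (x : X) :
    bumpAverage φ μ r g w x = bumpAverage φ μ r (fun w ↦ g w x) w :=
  ((ContinuousMap.evalCLM ℝ x : C(X, F) →L[ℝ] F).integral_comp_comm
    (integrable_normed_smul (hg.comp (by fun_prop)))).symm

end OpenPosMeasure

variable [μ.IsAddHaarMeasure]

theorem bumpAverage_eq_integral_sub {r : ℝ} (hr : 0 < r) (g : E → F) (w : E) :
    bumpAverage φ μ r g w =
      ∫ x, ((r ^ Module.finrank ℝ E)⁻¹ * φ.normed μ (r⁻¹ • (w - x))) • g x ∂μ := by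
  have scale := Measure.integral_comp_smul_of_nonneg μ
    (fun x ↦ φ.normed μ (r⁻¹ • x) • g (w - x)) r (hR := hr.le)
  simp only [inv_smul_smul₀ hr.ne'] at scale
  rw [bumpAverage, scale, ← integral_sub_left_eq_self _ μ w, ← integral_smul]
  simp only [sub_sub_cancel, mul_smul]

theorem contDiff_bumpAverage {n : ℕ∞} {ε : E → ℝ} (hε : ContDiff ℝ n ε)
    (hpos : ∀ w, 0 < ε w) {g : E → F} (hg : Continuous g) :
    ContDiff ℝ n fun w ↦ bumpAverage φ μ (ε w) g w := by
  -- Substituting `x = w - ε w • y` moves the whole dependence on `w` into the smooth kernel `k`.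
  let k (p x : E) : ℝ := (ε p ^ Module.finrank ℝ E)⁻¹ * φ.normed μ ((ε p)⁻¹ • x)
  let L : F →L[ℝ] ℝ →L[ℝ] F := (ContinuousLinearMap.lsmul ℝ ℝ).flip
  have hk : ContDiff ℝ n (fun q : E × E ↦ k q.1 q.2) := by
    have hε' : ContDiff ℝ n fun q : E × E ↦ ε q.1 := hε.comp contDiff_fst
    exact ((hε'.pow _).inv fun q ↦ (pow_pos (hpos _) _).ne').mul
      (φ.contDiff_normed.comp ((hε'.inv fun q ↦ (hpos _).ne').smul contDiff_snd))
  have hsupp (R : ℝ) (p x : E) (hp : p ∈ {p | ε p < R}) (hx : x ∉ closedBall 0 (R * φ.rOut)) :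
      k p x = 0 := by
    have : φ.rOut ≤ ‖(ε p)⁻¹ • x‖ := by
      rw [norm_smul, norm_inv, Real.norm_of_nonneg (hpos p).le, inv_mul_eq_div,
        le_div_iff₀ (hpos p), mul_comm]
      have : R * φ.rOut < ‖x‖ := by simpa using hx
      exact (mul_le_mul_of_nonneg_right (le_of_lt hp) φ.rOut_pos.le).trans this.le
    simp [k, normed_eq_zero_of_rOut_le_norm this]
  refine contDiff_iff_contDiffAt.2 fun w ↦ ?_
  have hopen : IsOpen {p | ε p < ε w + 1} := isOpen_lt hε.continuous continuous_const
  have hconv := contDiffOn_convolution_right_with_param (μ := μ) L hopen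
    (isCompact_closedBall 0 _) (hsupp (ε w + 1)) hg.locallyIntegrable hk.contDiffOn
  have heq : (fun w ↦ bumpAverage φ μ (ε w) g w) = fun w ↦ convolution g (k w) L μ w :=
    funext fun w ↦ bumpAverage_eq_integral_sub (hpos w) g w
  rw [heq]
  have hmem : (w, w) ∈ {p | ε p < ε w + 1} ×ˢ (univ : Set E) := ⟨lt_add_one (ε w), mem_univ w⟩
  exact (hconv.contDiffAt ((hopen.prod isOpen_univ).mem_nhds hmem)).comp w
    (f := fun w ↦ (w, w)) (contDiffAt_id.prodMk contDiffAt_id)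

end BumpAverage

theorem norm_gradient {𝕜 E : Type*} [RCLike 𝕜] [NormedAddCommGroup E] [InnerProductSpace 𝕜 E]
    [CompleteSpace E] (f : E → 𝕜) (w : E) : ‖gradient f w‖ = ‖fderiv 𝕜 f w‖ :=
  LinearIsometryEquiv.norm_map _ _

theorem continuous_fderiv_snd {P E F : Type*} [NormedAddCommGroup P] [NormedSpace ℝ P]
    [NormedAddCommGroup E] [NormedSpace ℝ E] [NormedAddCommGroup F] [NormedSpace ℝ F]
    {f : P → E → F} (hf : ContDiff ℝ 1 fun p : P × E ↦ f p.1 p.2) :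
    Continuous fun p : P × E ↦ fderiv ℝ (f p.1) p.2 := by
  have huncurry : ContDiff ℝ 1 (Function.uncurry fun (p : P × E) w ↦ f p.1 w) :=
    hf.comp ((contDiff_fst.comp contDiff_fst).prodMk contDiff_snd)
  exact (huncurry.fderiv contDiff_snd (zero_add 1).le).continuous

section JointContinuity

variable {X E F : Type*} [TopologicalSpace X] [NormedAddCommGroup E] [NormedSpace ℝ E]
  [FiniteDimensional ℝ E] [NormedAddCommGroup F] [NormedSpace ℝ F]

theorem continuous_continuousMultilinearMap_apply {k : ℕ} {A : X → E [×k]→L[ℝ] F} :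
    Continuous A ↔ ∀ v, Continuous fun x ↦ A x v := by
  refine ⟨fun hA v ↦ by fun_prop, fun hA ↦ ?_⟩
  induction k with
  | zero =>
    rw [← (continuousMultilinearCurryFin0 ℝ E F).comp_continuous_iff]
    exact hA 0
  | succ k ih =>
    rw [← (continuousMultilinearCurryLeftEquiv ℝ (fun _ : Fin (k + 1) ↦ E) F).comp_continuous_iff]
    exact continuous_clm_apply.2 fun v₀ ↦ ih fun v ↦ hA (Fin.cons v₀ v)

theorem continuous_iteratedFDeriv_eval [CompactSpace X] {H : E → C(X, F)} {k : ℕ}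
    (hH : ContDiff ℝ k H) :
    Continuous fun p : X × E ↦ iteratedFDeriv ℝ k (fun w ↦ H w p.1) p.2 := by
  have commute (p : X × E) (v : Fin k → E) :
      iteratedFDeriv ℝ k (fun w ↦ H w p.1) p.2 v = iteratedFDeriv ℝ k H p.2 v p.1 :=
    DFunLike.congr_fun ((ContinuousMap.evalCLM ℝ p.1 : C(X, F) →L[ℝ] F).iteratedFDeriv_comp_left
      hH.contDiffAt le_rfl) v
  refine continuous_continuousMultilinearMap_apply.2 fun v ↦ ?_
  simp only [commute]
  have := hH.continuous_iteratedFDeriv le_rfl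
  fun_prop

end JointContinuity

section Approximation

variable {X E F : Type*} [TopologicalSpace X] [CompactSpace X] [NormedAddCommGroup E]
  [NormedSpace ℝ E] [FiniteDimensional ℝ E] [NormedAddCommGroup F] [NormedSpace ℝ F]
  [CompleteSpace F]

theorem exists_contDiff_lipschitzWith_one_pos_mul_le {M : X × E → ℝ} (hM : Continuous M) :
    ∃ ε : E → ℝ, ContDiff ℝ ∞ ε ∧ (∀ w, 0 < ε w) ∧ LipschitzWith 1 ε ∧
      ∀ x w, M (x, w) * ε w ≤ 1 := by
  borelize E
  let φ : ContDiffBump (0 : E) := ⟨1 / 2, 1, by norm_num, by norm_num⟩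
  let μ : Measure E := Measure.addHaar
  have : CompactSpace (closedBall (0 : E) 1) :=
    isCompact_iff_compactSpace.1 (isCompact_closedBall 0 1)
  obtain ⟨N, hN, hMN⟩ := exists_continuous_norm_le (X := X × closedBall (0 : E) 1)
    (f := fun w q ↦ M (q.1, w + q.2))
    (hM.comp (f := fun p : E × X × closedBall (0 : E) 1 ↦ (p.2.1, p.1 + p.2.2)) (by fun_prop))
  have hN0 (w : E) : 0 < 1 + |N w| := by positivity
  obtain ⟨δ, hδ_lip, hδ⟩ := exists_lipschitzWith_one_pos_le
    ((continuous_const.add hN.abs).inv₀ fun w ↦ (hN0 w).ne') fun w ↦ inv_pos.2 (hN0 w)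
  refine ⟨bumpAverage φ μ 1 δ, ?_, bumpAverage_pos hδ_lip.continuous (fun w ↦ (hδ w).1) 1, ?_,
    fun x w ↦ ?_⟩
  · exact contDiff_bumpAverage contDiff_const (fun _ ↦ one_pos) hδ_lip.continuous
  · exact .of_dist_le_mul fun v w ↦ by
      simpa using dist_bumpAverage_le (φ := φ) (μ := μ) hδ_lip 1 1 v w
  · have pointwise (y : E) (hy : ‖y‖ < 1) : ‖M (x, w) * δ (w - (1 : ℝ) • y)‖ ≤ 1 := by
      have hM_le : |M (x, w)| ≤ N (w - y) := by
        simpa using hMN (w - y) (x, ⟨y, by simpa using hy.le⟩)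
      rw [one_smul, norm_mul, Real.norm_eq_abs, Real.norm_of_nonneg (hδ _).1.le]
      calc |M (x, w)| * δ (w - y) ≤ (1 + |N (w - y)|) * (1 + |N (w - y)|)⁻¹ := by
            gcongr
            · exact (hδ _).1.le
            · linarith [le_abs_self (N (w - y))]
            · exact (hδ _).2
        _ = 1 := mul_inv_cancel₀ (hN0 _).ne'
    calc M (x, w) * bumpAverage φ μ 1 δ w
        = ∫ y, φ.normed μ y • (M (x, w) * δ (w - (1 : ℝ) • y)) ∂μ := by
          simp only [bumpAverage, smul_eq_mul, ← integral_const_mul, mul_left_comm]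
      _ ≤ 1 := (Real.le_norm_self _).trans (norm_integral_normed_smul_le pointwise)

theorem exists_contDiff_mul_dist_le_lipschitzWith {M : X × E → ℝ} (hM : Continuous M)
    (G : C(E, C(X, F))) :
    ∃ H : E → C(X, F), ContDiff ℝ ∞ H ∧
      ∀ (x : X) (K : ℝ≥0), LipschitzWith K (fun w ↦ G w x) →
        (∀ w, M (x, w) * dist (H w x) (G w x) ≤ K) ∧ LipschitzWith (2 * K) fun w ↦ H w x := by
  borelize E
  let φ : ContDiffBump (0 : E) := ⟨1 / 2, 1, by norm_num, by norm_num⟩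
  let μ : Measure E := Measure.addHaar
  obtain ⟨ε, hε, hε_pos, hε_lip, hMε⟩ := exists_contDiff_lipschitzWith_one_pos_mul_le hM
  refine ⟨fun w ↦ bumpAverage φ μ (ε w) G w, contDiff_bumpAverage hε hε_pos G.continuous,
    fun x K hK ↦ ?_⟩
  have hdist (r s : ℝ) (v w : E) := dist_bumpAverage_le (φ := φ) (μ := μ) hK r s v w
  simp only [bumpAverage_apply G.continuous]
  constructor
  · intro w
    have hεK : dist (bumpAverage φ μ (ε w) (fun w ↦ G w x) w) (G w x) ≤ K * ε w := by
      simpa [φ, bumpAverage_zero, abs_of_pos (hε_pos w)] using hdist (ε w) 0 w w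
    rcases le_or_gt (M (x, w)) 0 with hM0 | hM0
    · exact (mul_nonpos_of_nonpos_of_nonneg hM0 dist_nonneg).trans K.coe_nonneg
    · calc _ ≤ M (x, w) * (K * ε w) := by gcongr
        _ = K * (M (x, w) * ε w) := mul_left_comm _ _ _
        _ ≤ K := mul_le_of_le_one_right K.coe_nonneg (hMε x w)
  · refine .of_dist_le_mul fun v w ↦ (hdist (ε v) (ε w) v w).trans ?_
    have : dist (ε v) (ε w) ≤ dist v w := by simpa using hε_lip.dist_le_mul v w
    calc K * (dist v w + 1 * dist (ε v) (ε w)) ≤ K * (dist v w + 1 * dist v w) := by gcongr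
      _ = (2 * K : ℝ≥0) * dist v w := by push_cast; ring

end Approximation

section Parameters

variable {P E F : Type*} [TopologicalSpace P] {S : Set P} [NormedAddCommGroup E]
  [NormedSpace ℝ E] [NormedAddCommGroup F] [NormedSpace ℝ F]

theorem continuousOn_prod_univ_iff {Y Z : Type*} [TopologicalSpace Y] [TopologicalSpace Z]
    {f : P × Y → Z} :
    ContinuousOn f (S ×ˢ univ) ↔ Continuous fun p : S × Y ↦ f (p.1, p.2) := by
  refine ⟨fun hf ↦ hf.comp_continuous (by fun_prop) fun p ↦ ⟨p.1.2, mem_univ _⟩, fun hf ↦ ?_⟩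
  exact continuousOn_iff_continuous_domRestrict.2 <|
    hf.comp (f := fun q : S ×ˢ (univ : Set Y) ↦ ((⟨q.1.1, q.2.1⟩ : S), q.1.2)) (by fun_prop)

theorem Gstar_exists_general [FiniteDimensional ℝ E] [CompleteSpace F] (hS : IsCompact S)
    {M : P × E → ℝ} (hM : ContinuousOn M (S ×ˢ univ))
    {G : P → E → F} (hG : ContinuousOn (fun p : P × E ↦ G p.1 p.2) (S ×ˢ univ)) :
    ∃ Gstar : P → E → F,
      ContinuousOn (fun p : P × E ↦ Gstar p.1 p.2) (S ×ˢ univ) ∧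
      ((∀ t ∈ S, ContDiff ℝ ∞ (Gstar t)) ∧
        ∀ k : ℕ, ContinuousOn (fun p : P × E ↦ iteratedFDeriv ℝ k (Gstar p.1) p.2) (S ×ˢ univ)) ∧
      ∀ t ∈ S, ∀ K : ℝ, 0 ≤ K → (∀ w w', ‖G t w - G t w'‖ ≤ K * ‖w - w'‖) →
        ∀ w, M (t, w) * ‖Gstar t w - G t w‖ ≤ K ∧ ‖fderiv ℝ (Gstar t) w‖ ≤ 2 * K := by
  classical
  simp only [continuousOn_prod_univ_iff] at hM hG ⊢
  have : CompactSpace S := isCompact_iff_compactSpace.1 hS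
  obtain ⟨H, hH, hbound⟩ := exists_contDiff_mul_dist_le_lipschitzWith hM
    (ContinuousMap.curry ⟨_, hG.comp continuous_swap⟩)
  let Gstar (t : P) (w : E) : F := if ht : t ∈ S then H w ⟨t, ht⟩ else 0
  have Gstar_eq (t : S) : Gstar t = fun w ↦ H w t := funext fun w ↦ dif_pos t.2
  refine ⟨Gstar, ?_, ⟨fun t ht ↦ ?_, fun k ↦ ?_⟩, fun t ht K hK hlip w ↦ ?_⟩
  · have := hH.continuous
    simp only [Gstar_eq]
    fun_prop
  · rw [Gstar_eq ⟨t, ht⟩]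
    exact (ContinuousMap.evalCLM ℝ ⟨t, ht⟩ : C(S, F) →L[ℝ] F).contDiff.comp hH
  · simp only [Gstar_eq]
    exact continuous_iteratedFDeriv_eval (hH.of_le (by exact_mod_cast le_top))
  · lift K to ℝ≥0 using hK
    obtain ⟨hclose, hgrad⟩ := hbound ⟨t, ht⟩ K <|
      .of_dist_le_mul fun v w ↦ by
        rw [dist_eq_norm, dist_eq_norm]; exact hlip v w
    rw [Gstar_eq ⟨t, ht⟩, ← dist_eq_norm]
    exact ⟨hclose w, norm_fderiv_le_of_lipschitz ℝ hgrad⟩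

end Parameters

end

/-- Lemma: mollification of `Ĝ` keeping the estimates. -/
theorem Gstar_exists
    (n : ℕ) (C₅ : ℝ) (hC₅ : 0 < C₅)
    (Ghat : ℝ → EuclideanSpace ℝ (Fin (2 * n)) → ℝ)
    (hGcont : ContinuousOn (fun p : ℝ × EuclideanSpace ℝ (Fin (2 * n)) => Ghat p.1 p.2)
      (Set.Icc (0:ℝ) 1 ×ˢ (Set.univ : Set (EuclideanSpace ℝ (Fin (2 * n))))))
    (hGlip : ∀ t ∈ Set.Ioc (0:ℝ) 1, ∀ w w' : EuclideanSpace ℝ (Fin (2 * n)),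
      |Ghat t w - Ghat t w'| ≤ C₅ / t ^ 2 * ‖w - w'‖)
    (f : ℝ → EuclideanSpace ℝ (Fin (2 * n)) → ℝ)
    (hf : ContDiff ℝ (⊤ : ℕ∞) (fun p : ℝ × EuclideanSpace ℝ (Fin (2 * n)) => f p.1 p.2))
    (hf01 : ∀ t w, f t w ∈ Set.Icc (0:ℝ) 1) :
    ∃ Gstar : ℝ → EuclideanSpace ℝ (Fin (2 * n)) → ℝ,
      ContinuousOn (fun p : ℝ × EuclideanSpace ℝ (Fin (2 * n)) => Gstar p.1 p.2)
        (Set.Icc (0:ℝ) 1 ×ˢ (Set.univ : Set (EuclideanSpace ℝ (Fin (2 * n))))) ∧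
      SmoothInSecond n Gstar ∧
      ∀ t ∈ Set.Ioc (0:ℝ) 1, ∀ w : EuclideanSpace ℝ (Fin (2 * n)),
        ‖gradient (f t) w‖ * |Gstar t w - Ghat t w| ≤ C₅ / t ^ 2 ∧
        ‖gradient (Gstar t) w‖ ≤ 2 * C₅ / t ^ 2 := by
  obtain ⟨Gstar, hcont, hsmooth, hbound⟩ := Gstar_exists_general isCompact_Icc
    (continuous_fderiv_snd (hf.of_le (by exact_mod_cast le_top))).norm.continuousOn hGcont
  refine ⟨Gstar, hcont, hsmooth, fun t ht w ↦ ?_⟩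
  simpa only [norm_gradient, mul_div_assoc, Real.norm_eq_abs] using
    hbound t (Set.Ioc_subset_Icc_self ht) (C₅ / t ^ 2) (by positivity) (hGlip t ht) w
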